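/- Let x ∈ O(m,n) be nondegenerate and not lying in A, with rank r and level ℓ, and suppose that every operator α ∈ supp(x) is non-injective (i.e. degenerate at some position) and that x does NOT satisfy (†). Let u := x̌ + (x̄∂_ℓ)σ_{ℓ−1} and v := (x̌∂_{ℓ−1})σ_{ℓ−1} + x̄, so that with w = x̌σ_ℓ + x̄σ_{ℓ−1} one has w∂_{ℓ+1} = u and w∂_{ℓ−1} = v. Then every operator in supp(u) is non-injective and every operator in supp(v) is non-injective. -/

import Mathlib

/-!
The two face formulas are the simplicial identities `σℓ∂(ℓ+1) = σ(ℓ-1)∂(ℓ-1) = id`,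
`σ(ℓ-1)∂(ℓ+1) = ∂ℓσ(ℓ-1)` and `σℓ∂(ℓ-1) = ∂(ℓ-1)σ(ℓ-1)`, applied to `x̌` and `x̄`.

For the supports, each of `u` and `v` is the sum of a part of `x`, whose operators are
non-injective by hypothesis, and of an element of the form `y σ(ℓ-1)`. Every operator in the
support of the latter factors through `σ(ℓ-1)`, which maps `m + 1` points to `m` points and so
is not injective (`not_injective_of_mem_support_act_degen`).
-/

abbrev ZD (a b : ℕ) := (Fin a →o Fin b) →₀ ℤ

noncomputable def act {a b c : ℕ} (x : ZD b c) (β : Fin a →o Fin b) : ZD a c :=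
  Finsupp.mapDomain (fun α => α.comp β) x

def face {m : ℕ} (i : Fin (m+1)) : Fin m →o Fin (m+1) :=
  ⟨i.succAbove, (Fin.succAboveOrderEmb i).monotone⟩

def degen {m : ℕ} (i : Fin m) : Fin (m+1) →o Fin m :=
  ⟨i.predAbove, Fin.predAbove_right_monotone i⟩

def memO {a b : ℕ} (x : ZD a b) : Prop :=
  (x.sum fun _ c => c) = 1 ∧
    ∀ (p : ℕ) (β : Fin (p+1) →o Fin a) (γ : Fin (p+1) →o Fin b),
      Function.Injective ⇑β → Function.Injective ⇑γ → 0 ≤ act x β γ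

/-- The witness operation `x ▽ₖ y`, for `x, y ∈ ℤΔ([m],[n])` and `1 ≤ k ≤ m`. -/
noncomputable def fill {m b : ℕ} (k : ℕ) (h1 : 1 ≤ k) (h2 : k ≤ m)
    (x y : ZD (m+1) b) : ZD (m+2) b :=
  act x (degen ⟨k, by omega⟩)
    - act (act (act x (face ⟨k-1, by omega⟩)) (degen ⟨k-1, by omega⟩)) (degen ⟨k-1, by omega⟩)
    + act y (degen ⟨k-1, by omega⟩)

/-- The pasting operation `x ⋆ₖ y`. -/
noncomputable def paste {m b : ℕ} (k : ℕ) (h1 : 1 ≤ k) (h2 : k ≤ m)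
    (x y : ZD (m+1) b) : ZD (m+1) b :=
  x - act (act x (face ⟨k-1, by omega⟩)) (degen ⟨k-1, by omega⟩) + y

/-- `x` is degenerate at `k`, i.e. `x = y σₖ` for some `y` one dimension lower. -/
def isDegenAt {a b : ℕ} (x : ZD a b) (k : ℕ) : Prop :=
  ∃ (p : ℕ) (hp : a = p + 1) (hk : k < p) (y : ZD p b),
    x = hp ▸ act y (degen ⟨k, hk⟩)

def isDegen {a b : ℕ} (x : ZD a b) : Prop := ∃ k, isDegenAt x k

/-- The number of preimages of the top element `n` under `α`. -/
def npre {a n : ℕ} (α : Fin a →o Fin (n+1)) : ℕ :=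
  (Finset.univ.filter fun i => α i = Fin.last n).card

/-- `x` lies in the simplicial subset `A`: all operators in the support of `x`
have equally many preimages of the top element. -/
def inA {a n : ℕ} (x : ZD a (n+1)) : Prop :=
  ∀ α ∈ x.support, ∀ β ∈ x.support, npre α = npre β

/-- `r` is the rank of `x`: the least `i` such that some `α ∈ supp x` has `α i = n`. -/
def isRank {a n : ℕ} (x : ZD a (n+1)) (r : Fin a) : Prop :=
  IsLeast {i : Fin a | ∃ α ∈ x.support, α i = Fin.last n} r

/-- `x̌`: the part of `x` supported on operators with `α r < n`. -/
noncomputable def checkPart {a n : ℕ} (x : ZD a (n+1)) (r : Fin a) : ZD a (n+1) :=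
  x.filter (fun α => ¬ (α r = Fin.last n))

/-- `x̄`: the part of `x` supported on operators with `α r = n`. -/
noncomputable def barPart {a n : ℕ} (x : ZD a (n+1)) (r : Fin a) : ZD a (n+1) :=
  x.filter (fun α => α r = Fin.last n)

/-- `ℓ` is the level of `x` (with rank `r`). -/
def isLevel {a n : ℕ} (x : ZD a (n+1)) (r ℓ : Fin a) : Prop :=
  IsLeast {i : Fin a | ∀ α ∈ (checkPart x r).support, α i = α r} ℓ

/-- Condition (†): `x̄` is degenerate at `ℓ - 1`. -/
def dagger {a n : ℕ} (x : ZD a (n+1)) (r ℓ : Fin a) : Prop :=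
  isDegenAt (barPart x r) ((ℓ : ℕ) - 1)

/-- The corank of `x`: the greatest number of preimages of `n` among operators in `supp x`. -/
def corank {a n : ℕ} (x : ZD a (n+1)) : ℕ := x.support.sup npre

/-- `u = x̌ + (x̄ ∂ℓ) σ(ℓ-1)`. -/
noncomputable def uPart {m n : ℕ} (x : ZD (m+1) (n+1)) (r ℓ : Fin (m+1))
    (h1 : 1 ≤ (ℓ : ℕ)) : ZD (m+1) (n+1) :=
  checkPart x r
    + act (act (barPart x r) (face ℓ)) (degen ⟨(ℓ:ℕ)-1, by have := ℓ.isLt; omega⟩)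

/-- `v = (x̌ ∂(ℓ-1)) σ(ℓ-1) + x̄`. -/
noncomputable def vPart {m n : ℕ} (x : ZD (m+1) (n+1)) (r ℓ : Fin (m+1))
    (h1 : 1 ≤ (ℓ : ℕ)) : ZD (m+1) (n+1) :=
  act (act (checkPart x r) (face ⟨(ℓ:ℕ)-1, by have := ℓ.isLt; omega⟩))
      (degen ⟨(ℓ:ℕ)-1, by have := ℓ.isLt; omega⟩)
    + barPart x r

/-- The parent `w = x̌ σℓ + x̄ σ(ℓ-1)`. -/
noncomputable def parent {m n : ℕ} (x : ZD (m+1) (n+1)) (r ℓ : Fin (m+1)) :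
    ZD (m+2) (n+1) :=
  act (checkPart x r) (degen ℓ)
    + act (barPart x r) (degen ⟨(ℓ:ℕ)-1, by have := ℓ.isLt; omega⟩)

/-- Bilinear extension of composition: `(x ∘ y)_γ = Σ_{α∘β = γ} x_α · y_β`. -/
noncomputable def zcomp {p m n : ℕ} (x : ZD m n) (y : ZD p m) : ZD p n :=
  x.sum fun α c => c • Finsupp.mapDomain (fun β => α.comp β) y

theorem act_add {a b c : ℕ} (x y : ZD b c) (β : Fin a →o Fin b) :
    act (x + y) β = act x β + act y β :=
  Finsupp.mapDomain_add

theorem act_act {a b c d : ℕ} (x : ZD c d) (β : Fin b →o Fin c) (γ : Fin a →o Fin b) :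
    act (act x β) γ = act x (β.comp γ) :=
  Finsupp.mapDomain_comp.symm

theorem act_id {b c : ℕ} (x : ZD b c) : act x OrderHom.id = x :=
  Finsupp.mapDomain_id

theorem face_val {m : ℕ} (i : Fin (m+1)) (j : Fin m) :
    (face i j : ℕ) = if (j : ℕ) < i then (j : ℕ) else j + 1 := by
  change (i.succAbove j : ℕ) = _
  simp only [Fin.succAbove, Fin.lt_def, Fin.val_castSucc]
  split_ifs <;> simp

theorem degen_val {m : ℕ} (i : Fin m) (j : Fin (m+1)) :
    (degen i j : ℕ) = if (i : ℕ) < j then (j : ℕ) - 1 else j := by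
  change (i.predAbove j : ℕ) = _
  simp only [Fin.predAbove, Fin.lt_def, Fin.val_castSucc]
  split_ifs <;> simp

theorem not_injective_of_mem_support_act_degen {m b : ℕ} (y : ZD m b) (i : Fin m)
    (α : Fin (m+1) →o Fin b) (hα : α ∈ (act y (degen i)).support) :
    ¬ Function.Injective ⇑α := by
  classical
  obtain ⟨δ, -, rfl⟩ := Finset.mem_image.1 (Finsupp.mapDomain_support hα)
  intro h
  have h' : Function.Injective (⇑δ ∘ ⇑(degen i)) := h
  simpa using Fintype.card_le_of_injective _ h'.of_comp

/-- If every operator in `supp x` is non-injective and `x` does not satisfy (†),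
then (with `w = x̌σℓ + x̄σ(ℓ-1)`, `u = w∂(ℓ+1)`, `v = w∂(ℓ-1)`) every operator in
`supp u` and in `supp v` is non-injective. -/
theorem stmt19 (m n : ℕ) (x : ZD (m+1) (n+1)) (hx : memO x) (hnd : ¬ isDegen x)
    (hA : ¬ inA x) (r ℓ : Fin (m+1)) (hr : isRank x r) (hl : isLevel x r ℓ)
    (hℓ : 1 ≤ (ℓ : ℕ)) (hni : ∀ α ∈ x.support, ¬ Function.Injective ⇑α)
    (hdag : ¬ dagger x r ℓ) :
    act (parent x r ℓ) (face ⟨(ℓ:ℕ)+1, by have := ℓ.isLt; omega⟩) = uPart x r ℓ hℓ ∧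
    act (parent x r ℓ) (face ⟨(ℓ:ℕ)-1, by have := ℓ.isLt; omega⟩) = vPart x r ℓ hℓ ∧
    (∀ α ∈ (uPart x r ℓ hℓ).support, ¬ Function.Injective ⇑α) ∧
    (∀ α ∈ (vPart x r ℓ hℓ).support, ¬ Function.Injective ⇑α) := by
  have hm := ℓ.isLt
  refine ⟨?_, ?_, fun α hα => ?_, fun α hα => ?_⟩
  · have e1 : (degen ℓ).comp (face ⟨(ℓ:ℕ)+1, by omega⟩) = OrderHom.id := by
      ext j
      simp only [OrderHom.comp_coe, Function.comp_apply, degen_val, face_val, OrderHom.id_coe, id]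
      split_ifs <;> omega
    have e2 : (degen (⟨(ℓ:ℕ)-1, by omega⟩ : Fin (m+1))).comp (face ⟨(ℓ:ℕ)+1, by omega⟩)
        = (face ℓ).comp (degen ⟨(ℓ:ℕ)-1, by omega⟩) := by
      ext j
      simp only [OrderHom.comp_coe, Function.comp_apply, degen_val, face_val]
      split_ifs <;> omega
    rw [parent, uPart, act_add, act_act, act_act, act_act, e1, e2, act_id]
  · have e1 : (degen ℓ).comp (face ⟨(ℓ:ℕ)-1, by omega⟩)
        = (face ⟨(ℓ:ℕ)-1, by omega⟩).comp (degen ⟨(ℓ:ℕ)-1, by omega⟩) := by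
      ext j
      simp only [OrderHom.comp_coe, Function.comp_apply, degen_val, face_val]
      split_ifs <;> omega
    have e2 : (degen (⟨(ℓ:ℕ)-1, by omega⟩ : Fin (m+1))).comp (face ⟨(ℓ:ℕ)-1, by omega⟩)
        = OrderHom.id := by
      ext j
      simp only [OrderHom.comp_coe, Function.comp_apply, degen_val, face_val, OrderHom.id_coe, id]
      split_ifs <;> omega
    rw [parent, vPart, act_add, act_act, act_act, act_act, e1, e2, act_id]
  · rcases Finset.mem_union.1 (Finsupp.support_add hα) with h | h
    · exact hni α (Finset.mem_of_mem_filter α h)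
    · exact not_injective_of_mem_support_act_degen _ _ α h
  · rcases Finset.mem_union.1 (Finsupp.support_add hα) with h | h
    · exact not_injective_of_mem_support_act_degen _ _ α h
    · exact hni α (Finset.mem_of_mem_filter α h)
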